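/- The quotient C[e_1,...,e_n]/J, where J is the span of {∂_α e^β : α ∈ ker ι*, Supp(α) ⊆ Supp(β)} for a unimodular surjection ι* : Z^n → Z^k, is canonically isomorphic as a graded Sym(g)-module to HP_0 of the invariant ring C[z,w]^G: explicitly, the map ψ : C[e_1,...,e_n] → C[z_1,...,z_n,w_1,...,w_n]^G / span of Poisson brackets, sending e_i to the class of z_i w_i, is a surjective Sym(g)-module map with kernel exactly J. -/

import Mathlib

open MvPolynomial

/-- The polynomial ring `ℂ[z₁,…,zₙ,w₁,…,wₙ]`. -/
abbrev ZW (n : ℕ) := MvPolynomial (Fin n ⊕ Fin n) ℂ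

/-- The variable `zᵢ`. -/
noncomputable def z {n : ℕ} (i : Fin n) : ZW n := MvPolynomial.X (Sum.inl i)

/-- The variable `wᵢ`. -/
noncomputable def w {n : ℕ} (i : Fin n) : ZW n := MvPolynomial.X (Sum.inr i)

/-- The standard Poisson bracket on `ℂ[z,w]`. -/
noncomputable def pb {n : ℕ} (p q : ZW n) : ZW n :=
  ∑ i : Fin n,
    (MvPolynomial.pderiv (Sum.inl i) p * MvPolynomial.pderiv (Sum.inr i) q -
      MvPolynomial.pderiv (Sum.inr i) p * MvPolynomial.pderiv (Sum.inl i) q)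

/-- The invariant ring `ℂ[z,w]^G`: the span of the monomials `z^β w^δ` with
`ι*(β − δ) = 0`. -/
noncomputable def InvRing {n k : ℕ} (A : Matrix (Fin k) (Fin n) ℤ) : Submodule ℂ (ZW n) :=
  Submodule.span ℂ {m : ZW n |
    ∃ β δ : Fin n → ℕ, A.mulVec (fun i => (β i : ℤ) - (δ i : ℤ)) = 0 ∧
      m = (∏ j : Fin n, z j ^ β j) * ∏ j : Fin n, w j ^ δ j}

/-- The span of all Poisson brackets of invariants, inside the invariant ring. -/
noncomputable def Brk {n k : ℕ} (A : Matrix (Fin k) (Fin n) ℤ) :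
    Submodule ℂ (InvRing A) :=
  Submodule.span ℂ {x : InvRing A |
    ∃ p ∈ InvRing A, ∃ q ∈ InvRing A, (x : ZW n) = pb p q}

theorem span_range_intCast_col_eq_top {n k : ℕ} (A : Matrix (Fin k) (Fin n) ℤ)
    (hsurj : Function.Surjective (A.mulVec : (Fin n → ℤ) → (Fin k → ℤ))) :
    Submodule.span ℚ (Set.range fun j => (fun i => (A i j : ℚ))) = ⊤ := by
  rw [eq_top_iff, ← (Pi.basisFun ℚ (Fin k)).span_eq, Submodule.span_le]
  rintro _ ⟨i, rfl⟩
  obtain ⟨m, hm⟩ := hsurj (Pi.single i 1)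
  have : (Pi.basisFun ℚ (Fin k)) i = ∑ j, (m j : ℚ) • (fun i => (A i j : ℚ)) := by
    ext a
    have := congrFun hm a
    simp only [Matrix.mulVec, dotProduct] at this
    have h2 := congrArg (Int.cast : ℤ → ℚ) this
    push_cast at h2
    simp only [Pi.basisFun_apply, Finset.sum_apply, Pi.smul_apply, smul_eq_mul]
    rw [show (Pi.single i (1:ℚ) : Fin k → ℚ) a = ((Pi.single i (1:ℤ) : Fin k → ℤ) a : ℚ) by
      simp [Pi.single_apply], ← h2]
    exact Finset.sum_congr rfl fun _ _ => mul_comm _ _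
  rw [this]
  exact Submodule.sum_mem _ fun j _ => Submodule.smul_mem _ _ (Submodule.subset_span ⟨j, rfl⟩)

/-- If the columns indexed by `I` are independent, a column in their rational span is an integral
combination of them with coefficients in `{-1, 0, 1}`. -/
theorem exists_mulVec_eq_col_of_mem_span {n k : ℕ} (A : Matrix (Fin k) (Fin n) ℤ)
    (hsurj : Function.Surjective (A.mulVec : (Fin n → ℤ) → (Fin k → ℤ)))
    (hunim : ∀ g : Fin k → Fin n, (A.submatrix id g).det ∈ ({-1, 0, 1} : Set ℤ))
    {I : Set (Fin n)} (hI : LinearIndepOn ℚ (fun j i => (A i j : ℚ)) I) (j : Fin n)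
    (hj : (fun i => (A i j : ℚ)) ∈ Submodule.span ℚ ((fun j i => (A i j : ℚ)) '' I)) :
    ∃ y : Fin n → ℤ, (∀ i, y i ∈ ({-1, 0, 1} : Set ℤ)) ∧ (∀ i ∉ I, y i = 0) ∧
      A.mulVec y = A.col j := by
  set v : Fin n → Fin k → ℚ := fun j i => (A i j : ℚ)
  obtain ⟨B, -, hIB, hspan, hB⟩ := exists_linearIndepOn_extension hI (Set.subset_univ I)
  have htop : Submodule.span ℚ (Set.range fun b : B => v b) = ⊤ := by
    rw [eq_top_iff, ← span_range_intCast_col_eq_top A hsurj, Submodule.span_le, ← Set.image_univ]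
    refine hspan.trans ?_
    rw [Set.image_eq_range]
  let e : Fin k ≃ B := (Pi.basisFun ℚ (Fin k)).indexEquiv (Module.Basis.mk hB htop.ge)
  let g : Fin k → Fin n := fun i => e i
  have hg : Function.Injective g := Subtype.val_injective.comp e.injective
  have hgr : Set.range g = B := by
    ext x; constructor
    · rintro ⟨i, rfl⟩; exact (e i).2
    · intro hx; exact ⟨e.symm ⟨x, hx⟩, by simp [g]⟩
  let M : Matrix (Fin k) (Fin k) ℤ := A.submatrix id g
  let MQ : Matrix (Fin k) (Fin k) ℚ := M.map (Int.castRingHom ℚ)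
  have hdetQ : MQ.det = (M.det : ℚ) := by
    simp [MQ, ← RingHom.mapMatrix_apply, ← RingHom.map_det]
  have hdet0 : M.det ≠ 0 := by
    have h1 : LinearIndependent ℚ MQ.col := hB.comp e e.injective
    rw [Matrix.linearIndependent_cols_iff_isUnit, Matrix.isUnit_iff_isUnit_det, hdetQ] at h1
    exact_mod_cast h1.ne_zero
  have hdet : M.det = 1 ∨ M.det = -1 := by
    have := hunim g
    simp only [Set.mem_insert_iff, Set.mem_singleton_iff] at this
    tauto
  obtain ⟨y, hyI, hy⟩ := (Finsupp.mem_span_image_iff_linearCombination ℚ).1 hj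
  have hy0 : ∀ i ∉ I, y i = 0 := fun i hi => by
    by_contra h
    exact hi ((Finsupp.mem_supported _ _).1 hyI (by simpa using h))
  have hysum : ∑ i, y i • v i = v j := by
    change _ = fun i => (A i j : ℚ)
    rw [← hy, Finsupp.linearCombination_apply, Finsupp.sum_fintype _ _ (by simp)]
  have hmul : MQ.mulVec (y ∘ g) = v j := by
    rw [← hysum]
    ext a
    simp only [Matrix.mulVec, dotProduct, Finset.sum_apply, Pi.smul_apply, smul_eq_mul]
    rw [← Finset.sum_subset (Finset.subset_univ (Finset.univ.image g)),
      Finset.sum_image hg.injOn]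
    · exact Finset.sum_congr rfl fun i _ => mul_comm _ _
    · intro x _ hx
      rw [hy0 x fun h => hx ?_, zero_mul]
      obtain ⟨i, rfl⟩ := hgr.ge (hIB h)
      simp
  have hcr : ∀ i, (M.det : ℚ) * y (g i) = ((A.submatrix id (Function.update g i j)).det : ℚ) := by
    intro i
    have h1 : MQ.cramer (v j) i = (M.det : ℚ) * y (g i) := by
      rw [← hmul, Matrix.cramer_eq_adjugate_mulVec, Matrix.mulVec_mulVec, Matrix.adjugate_mul,
        hdetQ]
      simp [Matrix.smul_mulVec]
    rw [← h1, Matrix.cramer_apply]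
    refine Eq.trans ?_ (RingHom.map_det (Int.castRingHom ℚ) _).symm
    congr 1
    ext a b
    by_cases hb : b = i
    · subst hb; simp [v]
    · simp [hb, MQ, M]
  have hint : ∀ i, ∃ m ∈ ({-1, 0, 1} : Set ℤ), (m : ℚ) = y i := by
    intro i
    by_cases hi : i ∈ I
    · obtain ⟨a, rfl⟩ := hgr.ge (hIB hi)
      have h1 := hcr a
      have h2 := hunim (Function.update g a j)
      generalize (A.submatrix id (Function.update g a j)).det = t at h1 h2
      rcases hdet with h | h <;> rw [h] at h1
      · exact ⟨t, h2, by push_cast at h1; linarith⟩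
      · refine ⟨-t, ?_, by push_cast at h1 ⊢; linarith⟩
        simp only [Set.mem_insert_iff, Set.mem_singleton_iff] at h2 ⊢
        omega
    · exact ⟨0, by simp, by simp [hy0 i hi]⟩
  choose m hm hmy using hint
  refine ⟨m, hm, fun i hi => by exact_mod_cast (hmy i).trans (hy0 i hi), ?_⟩
  ext a
  have := congrFun hysum a
  simp only [Finset.sum_apply, Pi.smul_apply, smul_eq_mul, ← hmy, v] at this
  simp only [Matrix.mulVec, dotProduct, Matrix.col_apply]
  rw [← Int.cast_inj (α := ℚ), ← this]
  push_cast
  exact Finset.sum_congr rfl fun i _ => mul_comm _ _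

/-- For a unimodular surjection, an integral kernel vector is an integral combination of kernel
vectors with entries in `{-1, 0, 1}` and no larger support. -/
theorem mem_span_kernel_sign_vectors {n k : ℕ} (A : Matrix (Fin k) (Fin n) ℤ)
    (hsurj : Function.Surjective (A.mulVec : (Fin n → ℤ) → (Fin k → ℤ)))
    (hunim : ∀ g : Fin k → Fin n, (A.submatrix id g).det ∈ ({-1, 0, 1} : Set ℤ))
    {α : Fin n → ℤ} (hα : A.mulVec α = 0) :
    α ∈ Submodule.span ℤ {c : Fin n → ℤ | A.mulVec c = 0 ∧
      (∀ i, c i ∈ ({-1, 0, 1} : Set ℤ)) ∧ ∀ i, c i ≠ 0 → α i ≠ 0} := by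
  classical
  obtain ⟨I, hIT, -, hspan, hI⟩ := exists_linearIndepOn_extension
    (linearIndepOn_empty ℚ fun j i => (A i j : ℚ)) (Set.empty_subset {i | α i ≠ 0})
  have hc : ∀ j, ∃ c : Fin n → ℤ, (α j ≠ 0 → j ∉ I → A.mulVec c = 0 ∧
      (∀ i, c i ∈ ({-1, 0, 1} : Set ℤ)) ∧ (∀ i, c i ≠ 0 → α i ≠ 0) ∧
      ∀ i ∉ I, c i = if i = j then 1 else 0) := by
    intro j
    by_cases hj : α j ≠ 0 ∧ j ∉ I
    · obtain ⟨y, hy1, hy0, hy⟩ := exists_mulVec_eq_col_of_mem_span A hsurj hunim hI j (hspan ⟨j, hj.1, rfl⟩)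
      refine ⟨Pi.single j 1 - y, fun _ _ => ⟨?_, fun i => ?_, fun i hi => ?_, fun i hi => ?_⟩⟩
      · rw [Matrix.mulVec_sub, hy, Matrix.mulVec_single_one, sub_self]
      · have h1 := hy1 i
        simp only [Set.mem_insert_iff, Set.mem_singleton_iff, Pi.sub_apply] at h1 ⊢
        by_cases h : i = j
        · subst h; simp [hy0 i hj.2]
        · simp only [Pi.single_apply, h, if_false]; omega
      · by_cases h : i = j
        · exact h ▸ hj.1
        · refine hIT (by_contra fun hiI => hi ?_)
          simp [h, hy0 i hiI]
      · simp [hy0 i hi, Pi.single_apply]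
    · exact ⟨0, fun h1 h2 => absurd ⟨h1, h2⟩ hj⟩
  choose c hc using hc
  let S : Finset (Fin n) := {j | α j ≠ 0 ∧ j ∉ I}
  have hS : ∀ j ∈ S, α j ≠ 0 ∧ j ∉ I := fun j hj => by simpa [S] using hj
  suffices h : α - ∑ j ∈ S, α j • c j = 0 by
    rw [sub_eq_zero.1 h]
    refine Submodule.sum_mem _ fun j hj => Submodule.smul_mem _ _ (Submodule.subset_span ?_)
    obtain ⟨h1, h2, h3, -⟩ := hc j (hS j hj).1 (hS j hj).2
    rw [← sub_eq_zero.1 h]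
    exact ⟨h1, h2, h3⟩
  set r := α - ∑ j ∈ S, α j • c j with hr
  have hker : A.mulVec r = 0 := by
    rw [hr, Matrix.mulVec_sub, hα, Matrix.mulVec_sum, zero_sub, neg_eq_zero]
    refine Finset.sum_eq_zero fun j hj => ?_
    rw [Matrix.mulVec_smul, (hc j (hS j hj).1 (hS j hj).2).1, smul_zero]
  have hr0 : ∀ i ∉ I, r i = 0 := by
    intro i hi
    have : ∑ j ∈ S, α j * c j i = ∑ j ∈ S, if i = j then α j else 0 :=
      Finset.sum_congr rfl fun j hj => by
        rw [(hc j (hS j hj).1 (hS j hj).2).2.2.2 i hi]; simp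
    simp only [hr, Pi.sub_apply, Finset.sum_apply, Pi.smul_apply, smul_eq_mul, this]
    rw [Finset.sum_ite_eq]
    by_cases h : α i = 0 <;> simp [S, h, hi]
  have hsum : ∑ i : I, (r i : ℚ) • (fun a => (A a i : ℚ)) = 0 := by
    have h2 : ∑ i : Fin n, (r i : ℚ) • (fun a => (A a i : ℚ)) = 0 := by
      ext a
      have := congrArg (Int.cast : ℤ → ℚ) (congrFun hker a)
      simp only [Matrix.mulVec, dotProduct] at this
      push_cast at this
      simp only [Finset.sum_apply, Pi.smul_apply, smul_eq_mul]
      simpa [mul_comm] using this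
    rw [← h2, ← Finset.sum_subset (Finset.subset_univ I.toFinset), ← Finset.sum_coe_sort I.toFinset]
    · exact Fintype.sum_equiv (Equiv.subtypeEquivRight (by simp)) _ _ fun _ => rfl
    · intro i _ hi
      simp [hr0 i (by simpa using hi)]
  ext i
  by_cases hi : i ∈ I
  · exact_mod_cast Fintype.linearIndependent_iff.1 hI (fun i => (r i : ℚ)) hsum ⟨i, hi⟩
  · exact hr0 i hi

section Invariants

variable {n k : ℕ}

theorem prod_X_pow_eq_monomial (β : Fin n →₀ ℕ) :
    ∏ j : Fin n, (X j : MvPolynomial (Fin n) ℂ) ^ β j = monomial β 1 := by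
  rw [monomial_eq, Finsupp.prod_fintype _ _ (by simp), C_1, one_mul]

theorem prod_z_pow_mul_prod_w_pow (β δ : Fin n →₀ ℕ) :
    (∏ j, z j ^ β j) * ∏ j, w j ^ δ j = monomial (β.sumElim δ) (1 : ℂ) := by
  rw [monomial_eq, Finsupp.prod_fintype _ _ (by simp), C_1, one_mul, Fintype.prod_sum_type]
  rfl

theorem InvRing_eq_span_monomial (A : Matrix (Fin k) (Fin n) ℤ) :
    InvRing A = Submodule.span ℂ {m : ZW n | ∃ β δ : Fin n →₀ ℕ,
      A.mulVec (fun i => (β i : ℤ) - δ i) = 0 ∧ m = monomial (β.sumElim δ) 1} := by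
  unfold InvRing
  congr 1
  ext m
  constructor
  · rintro ⟨β, δ, h, rfl⟩
    exact ⟨Finsupp.equivFunOnFinite.symm β, Finsupp.equivFunOnFinite.symm δ, h,
      prod_z_pow_mul_prod_w_pow (Finsupp.equivFunOnFinite.symm β) (Finsupp.equivFunOnFinite.symm δ)⟩
  · rintro ⟨β, δ, h, rfl⟩
    exact ⟨β, δ, h, (prod_z_pow_mul_prod_w_pow β δ).symm⟩

theorem monomial_sumElim_mem_InvRing {A : Matrix (Fin k) (Fin n) ℤ} {β δ : Fin n →₀ ℕ}
    (h : A.mulVec (fun i => (β i : ℤ) - δ i) = 0) (a : ℂ) :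
    monomial (β.sumElim δ) a ∈ InvRing A := by
  rw [← mul_one a, ← smul_eq_mul, ← smul_monomial, InvRing_eq_span_monomial]
  exact Submodule.smul_mem _ _ (Submodule.subset_span ⟨β, δ, h, rfl⟩)

/-- Substitution of `zᵢwᵢ` for `eᵢ`. -/
noncomputable def evalZW (n : ℕ) : MvPolynomial (Fin n) ℂ →ₐ[ℂ] ZW n :=
  aeval fun i => z i * w i

theorem evalZW_monomial (γ : Fin n →₀ ℕ) (a : ℂ) :
    evalZW n (monomial γ a) = monomial (γ.sumElim γ) a := by
  rw [evalZW, aeval_monomial, Finsupp.prod_fintype _ _ (by simp)]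
  simp_rw [mul_pow]
  rw [Finset.prod_mul_distrib, prod_z_pow_mul_prod_w_pow, algebraMap_eq, C_mul_monomial, mul_one]

theorem evalZW_mem_InvRing (A : Matrix (Fin k) (Fin n) ℤ) (f : MvPolynomial (Fin n) ℂ) :
    evalZW n f ∈ InvRing A := by
  induction f using MvPolynomial.induction_on' with
  | monomial γ a =>
    rw [evalZW_monomial]
    refine monomial_sumElim_mem_InvRing ?_ a
    simp only [sub_self]
    exact A.mulVec_zero
  | add p q hp hq => rw [map_add]; exact add_mem hp hq

/-- The Poisson bracket as a bilinear map. -/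
noncomputable def pbₗ (n : ℕ) : ZW n →ₗ[ℂ] ZW n →ₗ[ℂ] ZW n :=
  LinearMap.mk₂ ℂ pb
    (fun p p' q => by
      simp only [pb, map_add, ← Finset.sum_add_distrib]
      exact Finset.sum_congr rfl fun _ _ => by ring)
    (fun c p q => by
      simp only [pb, Derivation.map_smul, Finset.smul_sum, smul_sub, smul_mul_assoc])
    (fun p q q' => by
      simp only [pb, map_add, ← Finset.sum_add_distrib]
      exact Finset.sum_congr rfl fun _ _ => by ring)
    (fun c p q => by
      simp only [pb, Derivation.map_smul, Finset.smul_sum, smul_sub, mul_smul_comm])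

/-- `{zᵢwᵢ, z^β w^δ} = (δᵢ - βᵢ) z^β w^δ` for the bracket with `{zᵢ, wᵢ} = 1`. -/
theorem pb_z_mul_w_monomial (i : Fin n) (β δ : Fin n →₀ ℕ) :
    pb (z i * w i) (monomial (β.sumElim δ) 1) =
      ((δ i : ℂ) - β i) • monomial (β.sumElim δ) (1 : ℂ) := by
  have hz := X_mul_pderiv_monomial (R := ℂ) (i := Sum.inl i) (m := β.sumElim δ) (r := 1)
  have hw := X_mul_pderiv_monomial (R := ℂ) (i := Sum.inr i) (m := β.sumElim δ) (r := 1)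
  rw [Finsupp.sumElim_inl] at hz
  rw [Finsupp.sumElim_inr] at hw
  rw [pb, Finset.sum_eq_single i]
  · simp only [z, w, Derivation.leibniz, pderiv_X_self, smul_eq_mul, mul_one,
      pderiv_X_of_ne Sum.inl_ne_inr, pderiv_X_of_ne Sum.inr_ne_inl, mul_zero, add_zero, zero_add,
      hz, hw, sub_smul, Nat.cast_smul_eq_nsmul]
  · intro j _ hj
    simp [z, w, Derivation.leibniz, pderiv_X, hj.symm]
  · simp

theorem pb_monomial (s t : Fin n ⊕ Fin n →₀ ℕ) :
    pb (monomial s 1) (monomial t 1) =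
      ∑ i, monomial (s + t - Finsupp.single (Sum.inl i) 1 - Finsupp.single (Sum.inr i) 1)
        ((s (Sum.inl i) : ℂ) * t (Sum.inr i) - s (Sum.inr i) * t (Sum.inl i)) := by
  have key : ∀ (s t : Fin n ⊕ Fin n →₀ ℕ) (a b : Fin n ⊕ Fin n), a ≠ b →
      pderiv a (monomial s (1 : ℂ)) * pderiv b (monomial t 1) =
        monomial (s + t - Finsupp.single a 1 - Finsupp.single b 1) ((s a : ℂ) * t b) := by
    intro s t a b hab
    rw [pderiv_monomial, pderiv_monomial, monomial_mul, one_mul, one_mul]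
    by_cases ha : s a = 0
    · simp [ha]
    by_cases hb : t b = 0
    · simp [hb]
    congr 2
    ext x
    simp only [Finsupp.add_apply, Finsupp.tsub_apply, Finsupp.single_apply]
    split_ifs with h1 h2 h2
    · exact absurd (h1.trans h2.symm) hab
    · subst h1; omega
    · subst h2; omega
    · omega
  refine Finset.sum_congr rfl fun i _ => ?_
  rw [key _ _ _ _ Sum.inl_ne_inr, mul_comm (pderiv (Sum.inr i) _), key _ _ _ _ Sum.inl_ne_inr,
    add_comm t s, ← map_sub, mul_comm (t _ : ℂ)]

/-- A bracket of monomials of total degree `z^γ w^γ` is a derivative of `e^γ`, at `eᵢ = zᵢwᵢ`. -/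
theorem pb_monomial_of_add_eq {β δ β' δ' γ : Fin n →₀ ℕ} (hβ : β + β' = γ) (hδ : δ + δ' = γ) :
    pb (monomial (β.sumElim δ) 1) (monomial (β'.sumElim δ') 1) =
      evalZW n (∑ i, (((β i : ℤ) - δ i : ℤ) : ℂ) • pderiv i (monomial γ 1)) := by
  rw [pb_monomial, map_sum, ← Finsupp.sumElim_add, hβ, hδ]
  refine Finset.sum_congr rfl fun i _ => ?_
  rw [pderiv_monomial, one_mul, smul_monomial, evalZW_monomial]
  congr 2
  · ext (x | x) <;> simp [Finsupp.single_apply]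
  · have h1 : (β i : ℂ) + β' i = γ i := by rw [← hβ]; simp
    have h2 : (δ i : ℂ) + δ' i = γ i := by rw [← hδ]; simp
    simp only [Finsupp.sumElim_inl, Finsupp.sumElim_inr, smul_eq_mul]
    push_cast
    linear_combination (β i : ℂ) * h2 - δ i * h1

/-- The linear projection sending `z^γ w^γ` to `e^γ` and other monomials to zero. -/
noncomputable def diagProj (n : ℕ) : ZW n →ₗ[ℂ] MvPolynomial (Fin n) ℂ :=
  (basisMonomials (Fin n ⊕ Fin n) ℂ).constr ℂ fun s =>
    if ∀ i, s (Sum.inl i) = s (Sum.inr i) then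
      monomial (Finsupp.equivFunOnFinite.symm fun i => s (Sum.inl i)) 1 else 0

theorem diagProj_monomial (s : Fin n ⊕ Fin n →₀ ℕ) (a : ℂ) :
    diagProj n (monomial s a) = a • if ∀ i, s (Sum.inl i) = s (Sum.inr i) then
      monomial (Finsupp.equivFunOnFinite.symm fun i => s (Sum.inl i)) 1 else 0 := by
  rw [← mul_one a, ← smul_eq_mul, ← smul_monomial, map_smul, smul_eq_mul, mul_one,
    show monomial s (1 : ℂ) = basisMonomials (Fin n ⊕ Fin n) ℂ s by simp, diagProj,
    Module.Basis.constr_basis]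

theorem diagProj_evalZW (f : MvPolynomial (Fin n) ℂ) : diagProj n (evalZW n f) = f := by
  induction f using MvPolynomial.induction_on' with
  | monomial γ a =>
    rw [evalZW_monomial, diagProj_monomial, if_pos (by simp), smul_monomial, smul_eq_mul,
      mul_one]
    exact congrArg (monomial · a) (Finsupp.ext fun _ => rfl)
  | add p q hp hq => rw [map_add, map_add, hp, hq]

/-- The span of the derivatives `∂_α e^β` with `α ∈ ker A` and `Supp α ⊆ Supp β`. -/
noncomputable def derivSpan (A : Matrix (Fin k) (Fin n) ℤ) :
    Submodule ℂ (MvPolynomial (Fin n) ℂ) :=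
  Submodule.span ℂ {f : MvPolynomial (Fin n) ℂ |
    ∃ (α : Fin n → ℤ) (β : Fin n → ℕ), A.mulVec α = 0 ∧
      (∀ i, α i ≠ 0 → β i ≠ 0) ∧
      f = ∑ i : Fin n, (α i : ℂ) • MvPolynomial.pderiv i
            (∏ j : Fin n, MvPolynomial.X j ^ β j)}

theorem diagProj_pb_monomial_mem {A : Matrix (Fin k) (Fin n) ℤ} {β δ β' δ' : Fin n →₀ ℕ}
    (h : A.mulVec (fun i => (β i : ℤ) - δ i) = 0) :
    diagProj n (pb (monomial (β.sumElim δ) 1) (monomial (β'.sumElim δ') 1)) ∈ derivSpan A := by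
  by_cases hd : β + β' = δ + δ'
  · rw [pb_monomial_of_add_eq hd rfl, diagProj_evalZW, ← prod_X_pow_eq_monomial]
    refine Submodule.subset_span ⟨_, _, h, fun i hi => ?_, rfl⟩
    have := DFunLike.congr_fun hd i
    simp only [Finsupp.add_apply] at this ⊢
    omega
  · rw [pb_monomial, map_sum]
    refine Submodule.sum_mem _ fun i _ => ?_
    rw [diagProj_monomial]
    split_ifs with hs
    · have h0 : (β i * δ' i = 0 ∧ δ i * β' i = 0) := by
        by_contra hne
        refine hd (Finsupp.ext fun x => ?_)
        have h1 : 0 < β i + β' i ∧ 0 < δ i + δ' i := by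
          simp only [mul_eq_zero] at hne
          omega
        have := hs x
        simp only [Finsupp.add_apply, Finsupp.tsub_apply, Finsupp.single_apply,
          Finsupp.sumElim_inl, Finsupp.sumElim_inr, Sum.inl.injEq, Sum.inr.injEq,
          reduceCtorEq, if_false] at this ⊢
        split_ifs at this with hx
        · subst hx; omega
        · omega
      have h1 : (β i : ℂ) * δ' i = 0 := by exact_mod_cast h0.1
      have h2 : (δ i : ℂ) * β' i = 0 := by exact_mod_cast h0.2
      simp [h1, h2]
    · simp

theorem diagProj_pb_mem {A : Matrix (Fin k) (Fin n) ℤ} {p q : ZW n}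
    (hp : p ∈ InvRing A) (hq : q ∈ InvRing A) : diagProj n (pb p q) ∈ derivSpan A := by
  rw [InvRing_eq_span_monomial] at hp hq
  change diagProj n (pbₗ n p q) ∈ _
  induction hp using Submodule.span_induction with
  | mem p hp =>
    obtain ⟨β, δ, h, rfl⟩ := hp
    induction hq using Submodule.span_induction with
    | mem q hq =>
      obtain ⟨β', δ', -, rfl⟩ := hq
      exact diagProj_pb_monomial_mem h
    | zero => simp
    | add _ _ _ _ h1 h2 => rw [map_add, map_add]; exact add_mem h1 h2
    | smul c _ _ h1 => rw [map_smul, map_smul]; exact Submodule.smul_mem _ c h1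
  | zero => simp
  | add _ _ _ _ h1 h2 =>
    rw [map_add, LinearMap.add_apply, map_add]; exact add_mem h1 h2
  | smul c _ _ h1 =>
    rw [map_smul, LinearMap.smul_apply, map_smul]; exact Submodule.smul_mem _ c h1

/-- Substitution of `zᵢwᵢ` for `eᵢ`, as a map to the zeroth Poisson homology. -/
noncomputable def toHP0 (A : Matrix (Fin k) (Fin n) ℤ) :
    MvPolynomial (Fin n) ℂ →ₗ[ℂ] InvRing A ⧸ Brk A :=
  (Brk A).mkQ ∘ₗ (evalZW n).toLinearMap.codRestrict (InvRing A) (evalZW_mem_InvRing A)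

theorem mem_ker_toHP0 {A : Matrix (Fin k) (Fin n) ℤ} {f : MvPolynomial (Fin n) ℂ} :
    f ∈ LinearMap.ker (toHP0 A) ↔
      (⟨evalZW n f, evalZW_mem_InvRing A f⟩ : InvRing A) ∈ Brk A := by
  rw [LinearMap.mem_ker]
  exact Submodule.Quotient.mk_eq_zero _

theorem toHP0_surjective (A : Matrix (Fin k) (Fin n) ℤ) : Function.Surjective (toHP0 A) := by
  rw [← LinearMap.range_eq_top, eq_top_iff]
  rintro x -
  obtain ⟨⟨x, hx⟩, rfl⟩ := Submodule.Quotient.mk_surjective _ x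
  have hx' := hx
  rw [InvRing_eq_span_monomial] at hx'
  induction hx' using Submodule.span_induction with
  | mem p hp =>
    obtain ⟨β, δ, h, rfl⟩ := hp
    by_cases hd : β = δ
    · subst hd
      refine ⟨monomial β 1, ?_⟩
      simp only [toHP0, LinearMap.comp_apply, Submodule.mkQ_apply]
      congr 1
      exact Subtype.ext (evalZW_monomial β 1)
    · obtain ⟨i, hi⟩ := DFunLike.ne_iff.1 hd
      have hi' : ((δ i : ℂ) - β i) ≠ 0 := sub_ne_zero.2 fun h => hi (by exact_mod_cast h.symm)
      have hzw : z i * w i ∈ InvRing A := by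
        simpa [evalZW] using evalZW_mem_InvRing A (X i)
      rw [(Submodule.Quotient.mk_eq_zero _).2]
      · exact zero_mem _
      · have hmem : ((δ i : ℂ) - β i) • (⟨_, hx⟩ : InvRing A) ∈ Brk A :=
          Submodule.subset_span ⟨_, hzw, _, hx, (pb_z_mul_w_monomial i β δ).symm⟩
        exact (Submodule.smul_mem_iff _ hi').1 hmem
  | zero =>
    exact zero_mem _
  | add p q hp hq h1 h2 =>
    rw [← InvRing_eq_span_monomial] at hp hq
    exact add_mem (h1 hp) (h2 hq)
  | smul c p hp h1 =>
    rw [← InvRing_eq_span_monomial] at hp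
    exact Submodule.smul_mem _ c (h1 hp)

theorem ker_toHP0_le (A : Matrix (Fin k) (Fin n) ℤ) :
    LinearMap.ker (toHP0 A) ≤ derivSpan A := by
  intro f hf
  have hle : Brk A ≤ (derivSpan A).comap (diagProj n ∘ₗ (InvRing A).subtype) := by
    refine Submodule.span_le.2 ?_
    rintro x ⟨p, hp, q, hq, hx⟩
    simp only [SetLike.mem_coe, Submodule.mem_comap, LinearMap.comp_apply,
      Submodule.subtype_apply, hx]
    exact diagProj_pb_mem hp hq
  simpa [diagProj_evalZW] using hle (mem_ker_toHP0.1 hf)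

theorem sum_smul_pderiv_mem_ker_toHP0 {A : Matrix (Fin k) (Fin n) ℤ} {c : Fin n → ℤ}
    {γ : Fin n →₀ ℕ} (hA : A.mulVec c = 0) (hγ : ∀ i, |c i| ≤ γ i) :
    ∑ i, (c i : ℂ) • pderiv i (monomial γ 1) ∈ LinearMap.ker (toHP0 A) := by
  rw [mem_ker_toHP0]
  let β : Fin n →₀ ℕ := Finsupp.equivFunOnFinite.symm fun i => (c i).toNat
  let δ : Fin n →₀ ℕ := Finsupp.equivFunOnFinite.symm fun i => (-c i).toNat
  have hβ : ∀ i, β i = (c i).toNat := fun _ => rfl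
  have hδ : ∀ i, δ i = (-c i).toNat := fun _ => rfl
  have hc : ∀ i, (β i : ℤ) - δ i = c i := fun i => by rw [hβ, hδ]; omega
  have hβγ : β + (γ - β) = γ := by
    ext i
    have := abs_le.1 (hγ i)
    simp only [Finsupp.add_apply, Finsupp.tsub_apply, hβ]
    omega
  have hδγ : δ + (γ - δ) = γ := by
    ext i
    have := abs_le.1 (hγ i)
    simp only [Finsupp.add_apply, Finsupp.tsub_apply, hδ]
    omega
  refine Submodule.subset_span ⟨monomial (β.sumElim δ) 1, ?_,
    monomial ((γ - β).sumElim (γ - δ)) 1, ?_, ?_⟩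
  · exact monomial_sumElim_mem_InvRing (by simpa only [hc] using hA) 1
  · refine monomial_sumElim_mem_InvRing ?_ 1
    rw [← neg_eq_zero, ← Matrix.mulVec_neg, ← hA]
    congr 1
    ext i
    have h1 := DFunLike.congr_fun hβγ i
    have h2 := DFunLike.congr_fun hδγ i
    have h3 := hc i
    simp only [Finsupp.add_apply, Pi.neg_apply] at h1 h2 ⊢
    omega
  · rw [pb_monomial_of_add_eq hβγ hδγ]
    simp only [hc]

theorem derivSpan_le_ker_toHP0 {A : Matrix (Fin k) (Fin n) ℤ}
    (hsurj : Function.Surjective (A.mulVec : (Fin n → ℤ) → (Fin k → ℤ)))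
    (hunim : ∀ g : Fin k → Fin n, (A.submatrix id g).det ∈ ({-1, 0, 1} : Set ℤ)) :
    derivSpan A ≤ LinearMap.ker (toHP0 A) := by
  refine Submodule.span_le.2 ?_
  rintro _ ⟨α, β, hα, hβ, rfl⟩
  have hprod := prod_X_pow_eq_monomial (Finsupp.equivFunOnFinite.symm β)
  rw [Finsupp.coe_equivFunOnFinite_symm] at hprod
  rw [hprod, SetLike.mem_coe]
  have hspan := mem_span_kernel_sign_vectors A hsurj hunim hα
  set γ : Fin n →₀ ℕ := Finsupp.equivFunOnFinite.symm β with hγ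
  have hγβ : ∀ i, γ i = β i := fun _ => rfl
  suffices ∀ c ∈ Submodule.span ℤ {c : Fin n → ℤ | A.mulVec c = 0 ∧
      (∀ i, c i ∈ ({-1, 0, 1} : Set ℤ)) ∧ ∀ i, c i ≠ 0 → α i ≠ 0},
      ∑ i, (c i : ℂ) • pderiv i (monomial γ 1) ∈ LinearMap.ker (toHP0 A) from this α hspan
  intro c hc
  induction hc using Submodule.span_induction with
  | mem c hc =>
    obtain ⟨h1, h2, h3⟩ := hc
    refine sum_smul_pderiv_mem_ker_toHP0 h1 fun i => ?_
    have h4 := h2 i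
    have h5 := fun h => hβ i (h3 i h)
    simp only [Set.mem_insert_iff, Set.mem_singleton_iff] at h4
    rw [hγβ]
    rcases h4 with h | h | h <;> rw [h] at h5 ⊢ <;> simp at h5 ⊢ <;> omega
  | zero => simp
  | add p q _ _ h1 h2 =>
    simpa [add_smul, Finset.sum_add_distrib] using add_mem h1 h2
  | smul m p _ h1 =>
    simpa [mul_smul, Finset.smul_sum] using Submodule.smul_mem _ (m : ℂ) h1

end Invariants

/-- For a unimodular surjection `ι* : ℤⁿ → ℤᵏ` (matrix `A`), with
`J ⊆ ℂ[e₁,…,eₙ]` the span of `{∂_α e^β : α ∈ ker ι*, Supp(α) ⊆ Supp(β)}`, the map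
`ψ : ℂ[e₁,…,eₙ] → HP₀ = ℂ[z,w]^G / span{brackets}` sending `eᵢ ↦ [zᵢwᵢ]` (i.e. the
composition of `f ↦ f(z₁w₁,…,zₙwₙ)`, which lands in the invariant ring, with the
quotient map) is a well-defined surjective linear map with kernel exactly `J`; hence
`ℂ[e₁,…,eₙ]/J ≅ HP₀` canonically as graded `Sym(g)`-modules. -/
theorem stmt17 (n k : ℕ) (A : Matrix (Fin k) (Fin n) ℤ)
    (hsurj : Function.Surjective (A.mulVec : (Fin n → ℤ) → (Fin k → ℤ)))
    (hunim : ∀ g : Fin k → Fin n, (A.submatrix id g).det ∈ ({-1, 0, 1} : Set ℤ)) :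
    (∀ f : MvPolynomial (Fin n) ℂ,
        MvPolynomial.aeval (fun i : Fin n => z i * w i) f ∈ InvRing A) ∧
    ∃ ψ : MvPolynomial (Fin n) ℂ →ₗ[ℂ] ((InvRing A) ⧸ (Brk A)),
      (∀ (f : MvPolynomial (Fin n) ℂ)
          (hf : MvPolynomial.aeval (fun i : Fin n => z i * w i) f ∈ InvRing A),
        ψ f = Submodule.Quotient.mk
          (⟨MvPolynomial.aeval (fun i : Fin n => z i * w i) f, hf⟩ : InvRing A)) ∧
      Function.Surjective ψ ∧
      LinearMap.ker ψ =
        Submodule.span ℂ {f : MvPolynomial (Fin n) ℂ |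
          ∃ (α : Fin n → ℤ) (β : Fin n → ℕ), A.mulVec α = 0 ∧
            (∀ i, α i ≠ 0 → β i ≠ 0) ∧
            f = ∑ i : Fin n, (α i : ℂ) • MvPolynomial.pderiv i
                  (∏ j : Fin n, MvPolynomial.X j ^ β j)} := by
  exact ⟨evalZW_mem_InvRing A, toHP0 A, fun _ _ => rfl, toHP0_surjective A,
    (ker_toHP0_le A).antisymm (derivSpan_le_ker_toHP0 hsurj hunim)⟩
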